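/- arXiv:2003.07114 — 4 statements merged into one kernel-verified Lean document; each statement's English description precedes it below -/
import Mathlib

section
/- (Resurrection Lemma) Let M and N be τ-structures with M a substructure of N such that M ≺_{Σ₁} N. Then there exist a τ-structure Q and an embedding j of N into Q such that the restriction of j to M is an elementary embedding of M into Q. -/
namespace ModelCompanionship

open FirstOrder Language

universe u v

variable {L : FirstOrder.Language.{u, v}}

/-- A bundled `L`-structure with carrier in `Type (max u v)`. -/
structure BStruc (L : FirstOrder.Language.{u, v}) where
  /-- the underlying set of the structure -/
  carrier : Type (max u v)
  /-- the interpretation of the symbols of `L` -/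
  struc : L.Structure carrier

attribute [instance] BStruc.struc

/-- Iterated existential quantification of the last `k` bound variables. -/
def exsN {α : Type*} : ∀ {m k : ℕ}, L.BoundedFormula α (m + k) → L.BoundedFormula α m
  | _, 0, φ => φ
  | _, _ + 1, φ => exsN φ.ex

/-- `ψ` is a universal (`Π₁`) sentence: `∀ x⃗, φ` with `φ` quantifier-free. -/
def IsUniversalSentence (ψ : L.Sentence) : Prop :=
  ∃ (n : ℕ) (φ : L.BoundedFormula Empty n), φ.IsQF ∧ ψ = φ.alls

/-- `ψ` is a `Π₂` sentence: `∀ x⃗, ∃ y⃗, φ` with `φ` quantifier-free. -/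
def IsPi2Sentence (ψ : L.Sentence) : Prop :=
  ∃ (m k : ℕ) (φ : L.BoundedFormula Empty (m + k)), φ.IsQF ∧ ψ = (exsN φ).alls

/-- `ψ` holds in every model of `T`. -/
def SemConseq (T : L.Theory) (ψ : L.Sentence) : Prop :=
  ∀ M : BStruc L, M.carrier ⊨ T → M.carrier ⊨ ψ

/-- `T` is consistent: it has a model. -/
def Consistent (T : L.Theory) : Prop :=
  ∃ M : BStruc L, M.carrier ⊨ T

/-- `T` is complete: it is consistent and decides every sentence. -/
def IsCompleteTheory (T : L.Theory) : Prop :=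
  Consistent T ∧ ∀ ψ : L.Sentence, SemConseq T ψ ∨ SemConseq T ψ.not

/-- `T_∀`: the set of universal sentences true in every model of `T`. -/
def univFrag (T : L.Theory) : L.Theory :=
  {ψ | IsUniversalSentence ψ ∧ SemConseq T ψ}

/-- Two formulas in the same free variables are `T`-equivalent. -/
def TEquiv (T : L.Theory) {n : ℕ} (φ ψ : L.Formula (Fin n)) : Prop :=
  ∀ M : BStruc L, M.carrier ⊨ T → ∀ v : Fin n → M.carrier, φ.Realize v ↔ ψ.Realize v

section Maps

variable {M : Type (max u v)} {N : Type (max u v)} [L.Structure M] [L.Structure N]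

/-- `f` preserves and reflects all first-order formulas (with parameters). -/
def ElementaryOn (f : M → N) : Prop :=
  ∀ (n : ℕ) (φ : L.Formula (Fin n)) (v : Fin n → M),
    φ.Realize v ↔ φ.Realize fun i => f (v i)

/-- The embedding `e` is `Σ₁`-elementary: every existential formula with parameters
from the domain which holds in the codomain holds in the domain. -/
def Sigma1Elementary (e : M ↪[L] N) : Prop :=
  ∀ (n k : ℕ) (φ : L.BoundedFormula (Fin n) k), φ.IsQF → ∀ v : Fin n → M,
    (φ.exs.Realize fun i => e (v i)) → φ.exs.Realize v

end Maps

/-- `M` is a `T`-existentially closed structure. -/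
def IsEC (T : L.Theory) (M : Type (max u v)) [L.Structure M] : Prop :=
  (∃ (N : BStruc L) (_ : M ↪[L] N.carrier), N.carrier ⊨ T) ∧
    ∀ (N : BStruc L) (e : M ↪[L] N.carrier), N.carrier ⊨ T → Sigma1Elementary e

/-- `T` is model complete: substructure inclusions between models of `T` are elementary. -/
def IsModelComplete (T : L.Theory) : Prop :=
  ∀ (M N : BStruc L) (e : M.carrier ↪[L] N.carrier),
    M.carrier ⊨ T → N.carrier ⊨ T → ElementaryOn (L := L) fun a => e a

/-- `T*` is a model companion of `T`. -/
def IsModelCompanion (T Tstar : L.Theory) : Prop :=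
  (∀ M : BStruc L, M.carrier ⊨ T →
      ∃ (N : BStruc L) (_ : M.carrier ↪[L] N.carrier), N.carrier ⊨ Tstar) ∧
    (∀ M : BStruc L, M.carrier ⊨ Tstar →
      ∃ (N : BStruc L) (_ : M.carrier ↪[L] N.carrier), N.carrier ⊨ T) ∧
    IsModelComplete Tstar


/-- A quantifier-free fact about elements of `N`. -/
structure QFact (L : FirstOrder.Language.{u, v}) (N : Type (max u v)) [L.Structure N] where
  n : ℕ
  fml : L.Formula (Fin n)
  val : Fin n → N
  qf : fml.IsQF
  holds : fml.Realize val

theorem exists_conj {N : Type (max u v)} [L.Structure N] {n k : ℕ}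
    (g : N → Fin n ⊕ Fin k) (s : Finset (QFact L N)) :
    ∃ ψ : L.BoundedFormula (Fin n) k, ψ.IsQF ∧
      ∀ (P : Type (max u v)) [L.Structure P] (w : Fin n → P) (xs : Fin k → P),
        ψ.Realize w xs ↔ ∀ t ∈ s, t.fml.Realize fun i => Sum.elim w xs (g (t.val i)) := by
  classical
  induction s using Finset.induction_on with
  | empty => exact ⟨⊤, BoundedFormula.IsQF.top, by simp⟩
  | insert t s _ ih =>
    obtain ⟨ψ, hq, hψ⟩ := ih
    let θ : L.BoundedFormula (Fin n) k := BoundedFormula.relabel (k := 0) (fun i => g (t.val i)) t.fml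
    have hθ : θ.IsQF := t.qf.relabel _
    refine ⟨θ ⊓ ψ, hθ.inf hq, ?_⟩
    intro P _ w xs
    have h1 : θ.Realize w xs ↔ t.fml.Realize fun i => Sum.elim w xs (g (t.val i)) := by
      refine (BoundedFormula.realize_relabel (n := 0)).trans ?_
      rw [Formula.Realize, iff_eq_eq]
      exact congr rfl (Subsingleton.elim _ _)
    rw [BoundedFormula.realize_inf, h1, hψ P w xs]
    simp

theorem exists_retract {M N : Type (max u v)} [L.Structure M] [L.Structure N] [Nonempty M]
    (e : M ↪[L] N) (he : Sigma1Elementary e) (s : Finset (QFact L N)) :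
    ∃ f : N → M, (∀ m, f (e m) = m) ∧ ∀ t ∈ s, t.fml.Realize fun i => f (t.val i) := by
  classical
  obtain ⟨m0⟩ := ‹Nonempty M›
  let F : Finset N := insert (e m0) (s.biUnion fun t => Finset.univ.image t.val)
  have hF : ∀ t ∈ s, ∀ i, t.val i ∈ F := by
    intro t ht i
    refine Finset.mem_insert_of_mem (Finset.mem_biUnion.2 ⟨t, ht, ?_⟩)
    simp
  let idx : F ≃ Fin F.card := F.equivFin
  let p : N → F := fun x => if h : x ∈ F then ⟨x, h⟩ else ⟨e m0, Finset.mem_insert_self _ _⟩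
  have hp : ∀ x ∈ F, (p x : N) = x := fun x hx => by simp [p, hx]
  let r : N → M := Function.extend e id fun _ => m0
  have hr : ∀ m, r (e m) = m := fun m => e.injective.extend_apply _ _ _
  let g : N → Fin F.card ⊕ Fin F.card := fun x =>
    if x ∈ Set.range e then Sum.inl (idx (p x)) else Sum.inr (idx (p x))
  let w : Fin F.card → M := fun i => r (idx.symm i)
  obtain ⟨ψ, hq, hψ⟩ := exists_conj (L := L) g s
  have hN : ψ.exs.Realize fun i => e (w i) := by
    rw [BoundedFormula.realize_exs]
    refine ⟨fun i => (idx.symm i : N), ?_⟩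
    rw [hψ]
    intro t ht
    convert t.holds using 2 with i
    have hi := hF t ht i
    by_cases hx : t.val i ∈ Set.range e
    · simp only [g, if_pos hx, Sum.elim_inl, w, Equiv.symm_apply_apply, hp _ hi]
      obtain ⟨m, hm⟩ := hx
      rw [← hm, hr]
    · simp only [g, if_neg hx, Sum.elim_inr, Equiv.symm_apply_apply, hp _ hi]
  have hM := he _ _ ψ hq w hN
  rw [BoundedFormula.realize_exs] at hM
  obtain ⟨xs, hxs⟩ := hM
  rw [hψ] at hxs
  refine ⟨fun x => if x ∈ Set.range e then r x else xs (idx (p x)), ?_, ?_⟩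
  · intro m
    simp [hr]
  · intro t ht
    convert hxs t ht using 2 with i
    have hi := hF t ht i
    by_cases hx : t.val i ∈ Set.range e
    · simp only [g, if_pos hx, Sum.elim_inl, w, Equiv.symm_apply_apply, hp _ hi]
    · simp only [g, if_neg hx, Sum.elim_inr]

/-- Resurrection Lemma. -/
theorem resurrection (M N : Type (max u v)) [L.Structure M] [L.Structure N]
    (e : M ↪[L] N) (he : Sigma1Elementary e) :
    ∃ (Q : BStruc L) (j : N ↪[L] Q.carrier),
      ElementaryOn (L := L) fun a : M => j (e a) := by
  classical
  rcases isEmpty_or_nonempty N with hN | hN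
  · refine ⟨⟨N, inferInstance⟩, Embedding.refl L N, ?_⟩
    intro n φ x
    have hM : IsEmpty M := ⟨fun m => hN.elim (e m)⟩
    let E : M ≃[L] N :=
      { Equiv.equivOfIsEmpty M N with
        map_fun' := fun f x => hN.elim (Equiv.equivOfIsEmpty M N (Structure.funMap f x))
        map_rel' := fun r x => by
          have h := e.map_rel r x
          have h2 : (Equiv.equivOfIsEmpty M N).toFun ∘ x = e ∘ x :=
            funext fun i => hM.elim (x i)
          rw [h2]
          exact h }
    have h := StrongHomClass.realize_formula E φ (v := x)
    rw [← h]
    have h2 : E ∘ x = fun i => (Embedding.refl L N) (e (x i)) := funext fun i => hM.elim (x i)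
    rw [h2]
  · have hM : Nonempty M := by
      have h := he 0 1 ⊤ BoundedFormula.IsQF.top Fin.elim0 (by
        rw [BoundedFormula.realize_exs]
        exact ⟨fun _ => hN.some, by simp⟩)
      rw [BoundedFormula.realize_exs] at h
      exact ⟨h.choose 0⟩
    choose f hfe hf using exists_retract (L := L) e he
    let U : Ultrafilter (Finset (QFact L N)) := Ultrafilter.of Filter.atTop
    let Q : Type (max u v) := (U : Filter (Finset (QFact L N))).Product fun _ => M
    let c : (Finset (QFact L N) → M) → Q := fun x => Quotient.mk _ x
    let j : N → Q := fun x => c (fun s => f s x)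
    have los : ∀ (n : ℕ) (φ : L.Formula (Fin n)) (x : Fin n → Finset (QFact L N) → M),
        (φ.Realize fun i => c (x i)) ↔ ∀ᶠ s in (U : Filter (Finset (QFact L N))), φ.Realize fun i => x i s :=
      fun n φ x => Ultraproduct.realize_formula_cast (u := U) (M := fun _ => M) φ x
    have key : ∀ (n : ℕ) (φ : L.Formula (Fin n)) (x : Fin n → N), φ.IsQF → φ.Realize x →
        φ.Realize fun i => j (x i) := by
      intro n φ x hq hx
      rw [los]
      have hU : ∀ᶠ s : Finset (QFact L N) in (U : Filter (Finset (QFact L N))), {(⟨n, φ, x, hq, hx⟩ : QFact L N)} ≤ s :=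
        Ultrafilter.of_le Filter.atTop (Filter.eventually_ge_atTop _)
      filter_upwards [hU] with s hs
      exact hf s ⟨n, φ, x, hq, hx⟩ (hs (Finset.mem_singleton_self _))
    have key2 : ∀ (n : ℕ) (φ : L.Formula (Fin n)) (x : Fin n → N), φ.IsQF →
        ((φ.Realize fun i => j (x i)) ↔ φ.Realize x) := by
      intro n φ x hq
      refine ⟨fun h => ?_, key n φ x hq⟩
      by_contra hx
      exact Formula.realize_not.1 (key n φ.not x hq.not (Formula.realize_not.2 hx)) h
    refine ⟨⟨Q, inferInstanceAs (L.Structure ((U : Filter (Finset (QFact L N))).Product fun _ => M))⟩,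
      ⟨⟨j, ?_⟩, ?_, ?_⟩, ?_⟩
    · intro a b hab
      have h := key2 2 ((Term.var 0).equal (Term.var 1)) ![a, b]
        (BoundedFormula.IsAtomic.equal _ _).isQF
      simp only [Formula.realize_equal, Term.realize_var] at h
      exact h.1 hab
    · intro n F x
      have h := key2 (n + 1) (Formula.graph F) (Fin.cons (Structure.funMap F x) x)
        (BoundedFormula.IsAtomic.equal _ _).isQF
      have h2 := h.2 (Formula.realize_graph.2 rfl)
      have h3 : (fun i => j ((Fin.cons (Structure.funMap F x) x : Fin (n + 1) → N) i)) =
          (Fin.cons (j (Structure.funMap F x)) (j ∘ x) : Fin (n + 1) → Q) := by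
        funext i
        refine Fin.cases ?_ (fun i => ?_) i <;> simp
      rw [h3, Formula.realize_graph] at h2
      exact h2.symm
    · intro n R x
      have h := key2 n (R.formula fun i => Term.var i) x (BoundedFormula.IsAtomic.rel _ _).isQF
      simp only [Formula.realize_rel, Term.realize_var] at h
      exact h
    · intro n φ x
      have h := los n φ (fun i s => f s (e (x i)))
      simp only [hfe, Filter.eventually_const] at h
      refine h.symm.trans ?_
      have h2 : (fun i => c fun _ => x i) = fun i => j (e (x i)) := by
        funext i
        simp only [j, hfe]
      rw [h2]
      rfl

end ModelCompanionship
end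

section
/- Let T be a τ-theory, let M be a T-existentially closed τ-structure, and let N be a τ-structure such that N ≺_{Σ₁} M (N is a substructure of M and every existential formula with parameters from N true in M is true in N). Then N is T-existentially closed. -/
namespace ModelCompanionship

open FirstOrder Language

universe u v

variable {L : FirstOrder.Language.{u, v}}

/-- The quantifier-free diagram of `M`: quantifier-free formulas with parameters true in `M`. -/
structure QFDiag (L : FirstOrder.Language.{u, v}) (M : Type (max u v)) [L.Structure M] where
  /-- number of parameters -/
  k : ℕ
  /-- the formula -/
  φ : L.Formula (Fin k)
  /-- the parameters -/
  w : Fin k → M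
  qf : BoundedFormula.IsQF φ
  holds : φ.Realize w

/-- A finite family of relabelled diagram formulas has a quantifier-free conjunction. -/
theorem exists_conj_s3 {M : Type (max u v)} [L.Structure M] {n K : ℕ}
    (g : M → Fin n ⊕ Fin K) (S : Finset (QFDiag L M)) :
    ∃ ψ : L.BoundedFormula (Fin n) K, ψ.IsQF ∧
      ∀ (A : Type (max u v)) [L.Structure A] (a : Fin n → A) (y : Fin K → A),
        ψ.Realize a y ↔ ∀ s ∈ S, s.φ.Realize (Sum.elim a y ∘ g ∘ s.w) := by
  classical
  induction S using Finset.induction_on with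
  | empty => exact ⟨⊤, BoundedFormula.IsQF.top, by simp⟩
  | insert s S hs ih =>
    obtain ⟨ψ, hψ, hr⟩ := ih
    refine ⟨BoundedFormula.relabel (n := K) (k := 0) (g ∘ s.w) s.φ ⊓ ψ,
      (s.qf.relabel _).inf hψ, ?_⟩
    intro A _ a y
    rw [BoundedFormula.realize_inf, hr, Finset.forall_mem_insert,
      BoundedFormula.realize_relabel]
    refine and_congr ?_ Iff.rfl
    unfold Formula.Realize
    rw [iff_eq_eq]
    congr 1
    exact Subsingleton.elim _ _

/-- Finite approximations of a retraction `M → N` over finitely many parameters. -/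
theorem exists_approx {M N : Type (max u v)} [L.Structure M] [L.Structure N]
    (e : N ↪[L] M) (he : Sigma1Elementary e) [Nonempty N] {n : ℕ} (v : Fin n → N)
    (S : Finset (QFDiag L M)) :
    ∃ h : M → N, (∀ j, h (e (v j)) = v j) ∧ ∀ s ∈ S, s.φ.Realize (h ∘ s.w) := by
  classical
  obtain ⟨n0⟩ := ‹Nonempty N›
  let F : Finset M := insert (e n0) (S.biUnion fun s => Finset.univ.image s.w)
  let i0 : F := ⟨e n0, Finset.mem_insert_self _ _⟩
  let g : M → Fin n ⊕ Fin F.card := fun m =>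
    if hm : ∃ j, e (v j) = m then Sum.inl hm.choose
    else if hF : m ∈ F then Sum.inr (F.equivFin ⟨m, hF⟩) else Sum.inr (F.equivFin i0)
  let x : Fin F.card → M := fun i => (F.equivFin.symm i : M)
  have hg : ∀ m ∈ F, Sum.elim (fun j => e (v j)) x (g m) = m := by
    intro m hF
    by_cases hm : ∃ j, e (v j) = m
    · simp only [g, dif_pos hm, Sum.elim_inl]
      exact hm.choose_spec
    · simp [g, dif_neg hm, dif_pos hF, x]
  obtain ⟨ψ, hψ, hr⟩ := exists_conj_s3 g S
  have hM : ψ.exs.Realize fun j => e (v j) := by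
    rw [BoundedFormula.realize_exs]
    refine ⟨x, (hr _ _ _).2 fun s hs => ?_⟩
    have : Sum.elim (fun j => e (v j)) x ∘ g ∘ s.w = s.w := by
      funext i
      apply hg
      refine Finset.mem_insert_of_mem (Finset.mem_biUnion.2 ⟨s, hs, ?_⟩)
      exact Finset.mem_image_of_mem _ (Finset.mem_univ i)
    rw [this]
    exact s.holds
  have hN := he _ _ ψ hψ v hM
  rw [BoundedFormula.realize_exs] at hN
  obtain ⟨y, hy⟩ := hN
  refine ⟨Sum.elim v y ∘ g, fun j => ?_, fun s hs => (hr _ _ _).1 hy s hs⟩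
  have hm : ∃ j', e (v j') = e (v j) := ⟨j, rfl⟩
  simp only [Function.comp, g, dif_pos hm, Sum.elim_inl]
  exact e.injective hm.choose_spec

/-- A map preserving quantifier-free formulas is an embedding. -/
theorem exists_embedding {M Q : Type (max u v)} [L.Structure M] [L.Structure Q] (h : M → Q)
    (H : ∀ s : QFDiag L M, s.φ.Realize (h ∘ s.w)) : ∃ e : M ↪[L] Q, ∀ m, e m = h m := by
  have inj : Function.Injective h := by
    intro a b hab
    by_contra hne
    have := H ⟨2, (Term.equal (Term.var 0) (Term.var 1)).not, ![a, b],
      (BoundedFormula.IsAtomic.equal _ _).isQF.not, by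
        simpa [Formula.realize_not] using hne⟩
    simp [Formula.realize_not, hab] at this
  refine ⟨⟨⟨h, inj⟩, ?_, ?_⟩, fun _ => rfl⟩
  · intro n f x
    have := H ⟨n + 1, Formula.graph f, Fin.cons (Structure.funMap f x) x,
      (BoundedFormula.IsAtomic.equal _ _).isQF, Formula.realize_graph.2 rfl⟩
    simp only [Fin.comp_cons, Formula.realize_graph] at this
    exact this.symm
  · intro n R x
    constructor
    · intro hR
      by_contra hn
      have := H ⟨n, (R.formula fun i => Term.var i).not, x,
        (BoundedFormula.IsAtomic.rel _ _).isQF.not, by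
          simpa [Formula.realize_not, Formula.realize_rel] using hn⟩
      simp only [Formula.realize_not, Formula.realize_rel, Term.realize_var] at this
      exact this hR
    · intro hR
      have := H ⟨n, R.formula fun i => Term.var i, x,
        (BoundedFormula.IsAtomic.rel _ _).isQF, by
          simpa [Formula.realize_rel] using hR⟩
      simpa only [Formula.realize_rel, Term.realize_var] using this

/-- An empty structure into which `N` embeds embeds wherever `N` does. -/
theorem exists_embedding_of_isEmpty {M N P : Type (max u v)} [L.Structure M] [L.Structure N]
    [L.Structure P] [IsEmpty M] (e : N ↪[L] M) (f : N ↪[L] P) :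
    ∃ e' : M ↪[L] P, ∀ n, e' (e n) = f n := by
  refine ⟨⟨⟨isEmptyElim, fun a => isEmptyElim a⟩, fun f x => isEmptyElim (Structure.funMap f x),
    ?_⟩, fun n => isEmptyElim (e n)⟩
  intro n R x
  have h1 := e.map_rel R (fun i => isEmptyElim (x i))
  have h2 := f.map_rel R (fun i => isEmptyElim (x i))
  rw [show x = e ∘ (fun i => isEmptyElim (x i)) from funext fun i => isEmptyElim (x i), h1, ← h2]
  rw [iff_eq_eq]
  congr 1
  exact funext fun i => isEmptyElim (x i)

/-- a `Σ₁`-elementary substructure of a `T`-ec structure is `T`-ec. -/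
theorem isEC_of_sigma1_substructure (T : L.Theory)
    (M N : Type (max u v)) [L.Structure M] [L.Structure N]
    (hM : IsEC T M) (e : N ↪[L] M) (he : Sigma1Elementary e) :
    IsEC T N := by
  refine ⟨?_, ?_⟩
  · obtain ⟨Q, f, hQ⟩ := hM.1
    exact ⟨Q, f.comp e, hQ⟩
  intro P f hP n k φ hφ v hv
  rcases isEmpty_or_nonempty N with hN | hN
  · have hMe : IsEmpty M := by
      by_contra hne
      rw [not_isEmpty_iff] at hne
      obtain ⟨m⟩ := hne
      have := he 0 1 ⊤ BoundedFormula.IsQF.top Fin.elim0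
        (BoundedFormula.realize_exs.2 ⟨fun _ => m, by simp⟩)
      obtain ⟨y, -⟩ := BoundedFormula.realize_exs.1 this
      exact isEmptyElim (y 0)
    obtain ⟨e', he'⟩ := exists_embedding_of_isEmpty e f
    apply he n k φ hφ v
    apply hM.2 P e' hP n k φ hφ
    simpa only [he'] using hv
  · have : Nonempty P.carrier := hN.map f
    choose h hfix hS using exists_approx e he v
    let U : Ultrafilter (Finset (QFDiag L M)) := Ultrafilter.of Filter.atTop
    let Q : Type (max u v) := (U : Filter (Finset (QFDiag L M))).Product fun _ => P.carrier
    let c : M → Q := fun m => ((fun i => f (h i m) : Finset (QFDiag L M) → P.carrier) : Q)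
    have hc : ∀ s : QFDiag L M, s.φ.Realize (c ∘ s.w) := by
      intro s
      refine (Ultraproduct.realize_formula_cast s.φ (fun j i => f (h i (s.w j)))).2 ?_
      have hev : ∀ᶠ i in (Filter.atTop : Filter (Finset (QFDiag L M))), s ∈ i :=
        (Filter.eventually_ge_atTop {s}).mono fun i hi => Finset.singleton_subset_iff.1 hi
      have hU : ∀ᶠ i in (U : Filter (Finset (QFDiag L M))), s ∈ i :=
        Ultrafilter.of_le Filter.atTop hev
      refine hU.mono ?_
      intro i hi
      have h1 := (s.qf.realize_embedding f).2 (hS i s hi)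
      unfold Formula.Realize
      convert h1 using 1
      rfl
    obtain ⟨e', he'⟩ := exists_embedding c hc
    have hQ : Q ⊨ T := by
      refine ⟨fun σ hσ => ?_⟩
      exact (Ultraproduct.sentence_realize σ).2
        (Filter.Eventually.of_forall fun _ => hP.realize_of_mem σ hσ)
    apply he n k φ hφ v
    apply hM.2 ⟨Q, inferInstance⟩ e' hQ n k φ hφ
    have hv' : φ.exs.Realize fun j => c (e (v j)) := by
      refine (Ultraproduct.realize_formula_cast φ.exs (fun j i => f (h i (e (v j))))).2 ?_
      refine Filter.Eventually.of_forall fun i => ?_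
      simpa only [hfix] using hv
    simpa only [he'] using hv'

end ModelCompanionship
end

section
/- Let T be a τ-theory, let M be a T-existentially closed τ-structure, and let N be a model of T_∀ having M as a substructure. Let ψ(x⃗,y⃗,z⃗) be a quantifier-free τ-formula and a⃗ a finite tuple of elements of M. If N satisfies ∀x⃗∃y⃗ ψ(x⃗,y⃗,a⃗), then M satisfies ∀x⃗∃y⃗ ψ(x⃗,y⃗,a⃗). -/
namespace ModelCompanionship

open FirstOrder Language

universe u v

variable {L : FirstOrder.Language.{u, v}}

theorem realize_exsN {α : Type*} {A : Type*} [L.Structure A] :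
    ∀ {m k : ℕ} (φ : L.BoundedFormula α (m + k)) (v : α → A) (xs : Fin m → A),
      (exsN φ).Realize v xs ↔ ∃ ys : Fin k → A, φ.Realize v (Fin.append xs ys)
  | m, 0, φ, v, xs => by
    constructor
    · intro h
      refine ⟨Fin.elim0, ?_⟩
      rw [Fin.append_elim0]
      exact h
    · rintro ⟨ys, h⟩
      rw [Subsingleton.elim ys Fin.elim0, Fin.append_elim0] at h
      exact h
  | m, k + 1, φ, v, xs => by
    have h0 : exsN φ = exsN (m := m) (k := k) (BoundedFormula.ex φ) := rfl
    rw [h0, realize_exsN]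
    constructor
    · rintro ⟨ys, h⟩
      obtain ⟨y, hy⟩ := BoundedFormula.realize_ex.1 h
      refine ⟨Fin.snoc ys y, ?_⟩
      rw [Fin.append_snoc]
      exact hy
    · rintro ⟨ys, h⟩
      refine ⟨Fin.init ys, BoundedFormula.realize_ex.2 ⟨ys (Fin.last k), ?_⟩⟩
      rw [← Fin.append_snoc, Fin.snoc_init_self]
      exact h

theorem isQF_toFormula {α : Type*} {n : ℕ} {φ : L.BoundedFormula α n} (h : φ.IsQF) :
    BoundedFormula.IsQF φ.toFormula := by
  induction h with
  | falsum => exact .falsum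
  | of_isAtomic h =>
    cases h with
    | equal t₁ t₂ => exact (BoundedFormula.IsAtomic.equal _ _).isQF
    | rel R ts => exact (BoundedFormula.IsAtomic.rel _ _).isQF
  | imp _ _ h1 h2 => exact h1.imp h2

theorem exists_conj_s4 {α : Type*} (S : Set (L.Formula α)) (hS : S.Finite)
    (hq : ∀ σ ∈ S, BoundedFormula.IsQF σ) :
    ∃ θ : L.Formula α, BoundedFormula.IsQF θ ∧
      ∀ (A : Type (max u v)) [L.Structure A] (w : α → A),
        θ.Realize w ↔ ∀ σ ∈ S, σ.Realize w := by
  induction S, hS using Set.Finite.induction_on with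
  | empty => exact ⟨⊤, BoundedFormula.IsQF.top, fun A _ w => by simp⟩
  | @insert a S _ _ ih =>
    obtain ⟨θ, h1, h2⟩ := ih fun σ hσ => hq σ (Set.mem_insert_of_mem _ hσ)
    refine ⟨a ⊓ θ, (hq a (Set.mem_insert _ _)).inf h1, fun A _ w => ?_⟩
    rw [Formula.realize_inf, h2 A w, Set.forall_mem_insert]

/-- A quantifier-free formula true in a nonempty model of `T_∀` is realized in a model of `T`. -/
theorem exists_model_realize (T : L.Theory) (N : Type (max u v)) [L.Structure N] [Nonempty N]
    (hN : N ⊨ univFrag T) (θ : L.Formula N) (hθ : BoundedFormula.IsQF θ)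
    (h : θ.Realize (id : N → N)) :
    ∃ K : BStruc L, K.carrier ⊨ T ∧ ∃ w : N → K.carrier, θ.Realize w := by
  classical
  obtain ⟨b⟩ := ‹Nonempty N›
  let F : Finset N := insert b (BoundedFormula.freeVarFinset θ)
  let e := F.equivFin
  let f : N → Fin F.card := fun x =>
    if hx : x ∈ F then e ⟨x, hx⟩ else e ⟨b, Finset.mem_insert_self _ _⟩
  let g : Fin F.card → N := fun t => (e.symm t).1
  have hgf : ∀ x ∈ F, g (f x) = x := by
    intro x hx
    simp [g, f, hx]
  let θ' : L.BoundedFormula Empty F.card := BoundedFormula.relabel (Sum.inr ∘ f) θ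
  have real : ∀ (A : Type (max u v)) [L.Structure A] (v : Empty → A) (xs : Fin F.card → A),
      θ'.Realize v xs ↔ θ.Realize (xs ∘ f) := by
    intro A _ v xs
    refine (BoundedFormula.realize_relabel (φ := θ) (g := Sum.inr ∘ f) (v := v)
      (xs := xs)).trans ?_
    rw [Formula.Realize]
    exact iff_of_eq (congrArg₂ _ rfl (Subsingleton.elim _ _))
  have hNθ : θ.Realize (g ∘ f) := by
    have h1 := (BoundedFormula.realize_restrictFreeVar (φ := θ)
      (f := fun x => (x : N)) (v := (id : N → N)) (xs := default) (id : N → N)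
      (fun a => rfl)).2 h
    exact (BoundedFormula.realize_restrictFreeVar (φ := θ)
      (f := fun x => (x : N)) (v := (id : N → N)) (xs := default) (g ∘ f)
      (fun a => (hgf a (Finset.mem_insert_of_mem a.2)).symm)).1 h1
  by_contra hcon
  push Not at hcon
  have hmem : θ'.not.alls ∈ univFrag T := by
    refine ⟨⟨_, _, (hθ.relabel _).not, rfl⟩, fun K hK => ?_⟩
    rw [Sentence.Realize, BoundedFormula.realize_alls]
    intro xs
    rw [BoundedFormula.realize_not, real]
    exact hcon K hK _
  have hs := hN.realize_of_mem _ hmem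
  rw [Sentence.Realize, BoundedFormula.realize_alls] at hs
  have := hs g
  rw [BoundedFormula.realize_not, real] at this
  exact this hNθ

/-- The quantifier-free diagram of `N`. -/
def qfDiag (L : FirstOrder.Language.{u, v}) (N : Type (max u v)) [L.Structure N] :
    L[[N]].Theory :=
  {σ | BoundedFormula.IsQF (Formula.equivSentence.symm σ) ∧
    (Formula.equivSentence.symm σ).Realize (id : N → N)}

theorem diag_satisfiable (T : L.Theory) (N : Type (max u v)) [L.Structure N] [Nonempty N]
    (hN : N ⊨ univFrag T) :
    ((L.lhomWithConstants N).onTheory T ∪ qfDiag L N).IsSatisfiable := by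
  rw [Theory.isSatisfiable_iff_isFinitelySatisfiable]
  intro T0 hT0
  let S : Set (L.Formula N) :=
    Formula.equivSentence.symm '' ((T0 : Set L[[N]].Sentence) ∩ qfDiag L N)
  have hSf : S.Finite := (T0.finite_toSet.inter_of_left _).image _
  obtain ⟨θ, hq, hr⟩ := exists_conj_s4 S hSf (by rintro _ ⟨σ, hσ, rfl⟩; exact hσ.2.1)
  obtain ⟨K, hK, w, hw⟩ := exists_model_realize T N hN θ hq
    ((hr N id).2 (by rintro _ ⟨σ, hσ, rfl⟩; exact hσ.2.2))
  rw [hr] at hw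
  let := constantsOn.structure w
  have : Nonempty K.carrier := ⟨w (Classical.arbitrary N)⟩
  have hm : K.carrier ⊨ (T0 : L[[N]].Theory) := by
    refine ⟨fun σ hσ => ?_⟩
    rcases hT0 hσ with h | h
    · exact ((LHom.onTheory_model _ _).2 hK).realize_of_mem _ h
    · exact (Formula.realize_equivSentence_symm K.carrier σ w).1 (hw _ ⟨σ, ⟨hσ, h⟩, rfl⟩)
  exact Theory.Model.isSatisfiable K.carrier

theorem exists_extension (T : L.Theory) (N : Type (max u v)) [L.Structure N] [Nonempty N]
    (hN : N ⊨ univFrag T) :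
    ∃ (K : BStruc L) (_ : N ↪[L] K.carrier), K.carrier ⊨ T := by
  obtain ⟨K⟩ := diag_satisfiable T N hN
  let : L.Structure K := (L.lhomWithConstants N).reduct K
  have : (L.lhomWithConstants N).IsExpansionOn K := LHom.isExpansionOn_reduct _ _
  have hT : K ⊨ T := (LHom.onTheory_model (L.lhomWithConstants N) T).1
    (K.is_model.mono Set.subset_union_left)
  let w : N → K := fun a => (L.con a : K)
  have key : ∀ θ : L.Formula N, BoundedFormula.IsQF θ → θ.Realize (id : N → N) →
      θ.Realize w := by
    intro θ hq h
    refine (Formula.realize_equivSentence K θ).1 (K.is_model.realize_of_mem _ (Or.inr ?_))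
    simpa [qfDiag] using And.intro hq h
  have key2 : ∀ θ : L.Formula N, BoundedFormula.IsQF θ →
      (θ.Realize w ↔ θ.Realize (id : N → N)) := by
    intro θ hq
    refine ⟨fun h => ?_, key θ hq⟩
    by_contra hn
    exact (Formula.realize_not.1 (key θ.not hq.not (Formula.realize_not.2 hn))) h
  refine ⟨⟨K, inferInstance⟩, ⟨⟨w, ?_⟩, ?_, ?_⟩, hT⟩
  · intro x y hxy
    have := (key2 (Term.equal (Term.var x) (Term.var y))
      (BoundedFormula.IsAtomic.equal _ _).isQF).1 (by simpa [Formula.realize_equal] using hxy)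
    simpa [Formula.realize_equal] using this
  · intro n f x
    have := key (Term.equal (Term.func f fun t => Term.var (x t)) (Term.var (Structure.funMap f x)))
      (BoundedFormula.IsAtomic.equal _ _).isQF (by simp [Formula.realize_equal])
    simp only [Formula.realize_equal, Term.realize_func, Term.realize_var] at this
    exact this.symm
  · intro n R x
    have := key2 (R.formula fun t => Term.var (x t)) (BoundedFormula.IsAtomic.rel _ _).isQF
    simp only [Formula.realize_rel, Term.realize_var] at this
    exact this

/-- `Π₂`-sentences with parameters in a `T`-ec structure `M` descend from
any extension of `M` which models `T_∀`. -/
theorem pi2_descends_to_ec (T : L.Theory)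
    (M N : Type (max u v)) [L.Structure M] [L.Structure N]
    (hM : IsEC T M) (i : M ↪[L] N) (hN : N ⊨ univFrag T)
    {p q r : ℕ} (ψ : L.BoundedFormula (Fin r) (p + q)) (hψ : ψ.IsQF)
    (a : Fin r → M)
    (h : (exsN ψ).alls.Realize fun j => i (a j)) :
    (exsN ψ).alls.Realize a := by
  rw [BoundedFormula.realize_alls] at h ⊢
  intro x
  rw [realize_exsN]
  obtain ⟨ys, hy⟩ := (realize_exsN _ _ _).1 (h (i ∘ x))
  rcases isEmpty_or_nonempty N with hE | hE
  · refine ⟨fun t => isEmptyElim (ys t), (hψ.realize_embedding i).1 ?_⟩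
    have e1 : i ∘ Fin.append x (fun t => isEmptyElim (ys t)) = Fin.append (i ∘ x) ys :=
      funext fun t => isEmptyElim (i (Fin.append x (fun t => isEmptyElim (ys t)) t))
    rw [e1]
    exact hy
  · obtain ⟨K, j, hK⟩ := exists_extension T N hN
    let c : Fin r ⊕ Fin (p + q) → Fin (r + p) ⊕ Fin q :=
      Sum.elim (fun s => Sum.inl (Fin.castAdd p s))
        (fun t => Fin.addCases (fun s => Sum.inl (Fin.natAdd r s)) (fun s => Sum.inr s) t)
    let χ : L.BoundedFormula (Fin (r + p)) q := BoundedFormula.relabel c ψ.toFormula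
    have hχ : χ.IsQF := (isQF_toFormula hψ).relabel c
    have real : ∀ (A : Type (max u v)) [L.Structure A] (a : Fin r → A) (x : Fin p → A)
        (ys : Fin q → A), χ.Realize (Fin.append a x) ys ↔ ψ.Realize a (Fin.append x ys) := by
      intro A _ a x ys
      refine (BoundedFormula.realize_relabel (φ := ψ.toFormula) (g := c)
        (v := Fin.append a x) (xs := ys)).trans ?_
      refine (iff_of_eq (congrArg₂ _ rfl (Subsingleton.elim _ _))).trans
        ((BoundedFormula.realize_toFormula ψ _).trans (iff_of_eq (congrArg₂ _ ?_ ?_)))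
      · funext s
        simp [c]
      · funext t
        refine Fin.addCases (fun s => ?_) (fun s => ?_) t <;> simp [c]
    have := hM.2 K (j.comp i) hK (r + p) q χ hχ (Fin.append a x) (by
      rw [BoundedFormula.realize_exs]
      refine ⟨j ∘ ys, ?_⟩
      have e1 : (fun t => (j.comp i) (Fin.append a x t)) =
          Fin.append (j ∘ i ∘ a) (j ∘ i ∘ x) := by
        funext t
        refine Fin.addCases (fun s => ?_) (fun s => ?_) t <;> simp
      rw [e1, real]
      have e2 : Fin.append (j ∘ i ∘ x) (j ∘ ys) = j ∘ Fin.append (i ∘ x) ys := by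
        funext t
        refine Fin.addCases (fun s => ?_) (fun s => ?_) t <;> simp
      rw [e2]
      exact (hψ.realize_embedding j).2 hy)
    rw [BoundedFormula.realize_exs] at this
    obtain ⟨zs, hz⟩ := this
    exact ⟨zs, (real M a x zs).1 hz⟩

end ModelCompanionship
end

section
/- Let T be a τ-theory and suppose T* is a model companion of T. Then the models of T* are exactly the existentially closed models of T_∀: a τ-structure M is a model of T* if and only if M is T_∀-existentially closed. -/
namespace ModelCompanionship

open FirstOrder Language

universe u v

variable {L : FirstOrder.Language.{u, v}}

open FirstOrder.Language.BoundedFormula in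
lemma exists_support {α : Type*} {n : ℕ} (φ : L.BoundedFormula α n) :
    ∃ F : Finset α, ∀ (K : BStruc L) (v w : α → K.carrier) (xs : Fin n → K.carrier),
      (∀ a ∈ F, v a = w a) → (φ.Realize v xs ↔ φ.Realize w xs) := by
  classical
  refine ⟨φ.freeVarFinset, fun K v w xs h => ?_⟩
  rw [← realize_restrictFreeVar (φ := φ) (f := id) (v := fun a => v a.1) (xs := xs) v
      (fun _ => rfl),
    realize_restrictFreeVar (φ := φ) (f := id) (v := fun a => v a.1) (xs := xs) w
      (fun a => h a.1 a.2)]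

lemma exists_conj_s12 {α : Type*} (s : Finset (L.Formula α)) (hs : ∀ χ ∈ s, χ.IsQF) :
    ∃ θ : L.Formula α, θ.IsQF ∧ ∀ (K : BStruc L) (f : α → K.carrier),
      θ.Realize f ↔ ∀ χ ∈ s, χ.Realize f := by
  classical
  induction s using Finset.induction_on with
  | empty => exact ⟨⊤, BoundedFormula.IsQF.top, fun K f => by simp [Formula.realize_top]⟩
  | insert a s _ ih =>
    obtain ⟨θ, hθ, h⟩ := ih (fun χ hχ => hs χ (Finset.mem_insert_of_mem hχ))
    refine ⟨a ⊓ θ, (hs a (Finset.mem_insert_self _ _)).inf hθ, fun K f => ?_⟩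
    rw [Formula.realize_inf, h]
    simp

lemma exists_embedding_of_qf (P K : BStruc L) (f : P.carrier → K.carrier)
    (hf : ∀ θ : L.Formula P.carrier, θ.IsQF → θ.Realize id → θ.Realize f) :
    ∃ e : P.carrier ↪[L] K.carrier, ∀ a, e a = f a := by
  have hf' : ∀ θ : L.Formula P.carrier, θ.IsQF → (θ.Realize f ↔ θ.Realize id) := by
    intro θ hθ
    refine ⟨fun h => ?_, hf θ hθ⟩
    by_contra hc
    exact Formula.realize_not.1 (hf θ.not hθ.not (Formula.realize_not.2 hc)) h
  refine ⟨⟨⟨f, ?_⟩, ?_, ?_⟩, fun a => rfl⟩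
  · intro a b hab
    have := hf' ((Term.var a).equal (Term.var b))
      (BoundedFormula.IsQF.of_isAtomic (BoundedFormula.IsAtomic.equal _ _))
    rw [Formula.realize_equal, Formula.realize_equal] at this
    exact this.1 hab
  · intro n g x
    have := hf' ((Term.func g fun i => Term.var (x i)).equal
        (Term.var (Structure.funMap g x)))
      (BoundedFormula.IsQF.of_isAtomic (BoundedFormula.IsAtomic.equal _ _))
    rw [Formula.realize_equal, Formula.realize_equal] at this
    exact (this.2 rfl).symm
  · intro n r x
    have := hf' (r.formula fun i => Term.var (x i))
      (BoundedFormula.IsQF.of_isAtomic (BoundedFormula.IsAtomic.rel _ _))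
    rw [Formula.realize_rel, Formula.realize_rel] at this
    exact this

/-- On empty structures every formula is equivalent to a quantifier-free one. -/
lemma exists_qf_on_empty {α : Type*} {n : ℕ} (φ : L.BoundedFormula α n) :
    ∃ θ : L.BoundedFormula α n, θ.IsQF ∧ ∀ (K : BStruc L), IsEmpty K.carrier →
      ∀ (v : α → K.carrier) (xs : Fin n → K.carrier), φ.Realize v xs ↔ θ.Realize v xs := by
  induction φ with
  | falsum => exact ⟨_, BoundedFormula.IsQF.falsum, fun K _ v xs => Iff.rfl⟩
  | equal t₁ t₂ =>
    exact ⟨_, BoundedFormula.IsQF.of_isAtomic (BoundedFormula.IsAtomic.equal t₁ t₂),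
      fun K _ v xs => Iff.rfl⟩
  | rel R ts =>
    exact ⟨_, BoundedFormula.IsQF.of_isAtomic (BoundedFormula.IsAtomic.rel R ts),
      fun K _ v xs => Iff.rfl⟩
  | imp φ₁ φ₂ ih₁ ih₂ =>
    obtain ⟨θ₁, h₁, e₁⟩ := ih₁
    obtain ⟨θ₂, h₂, e₂⟩ := ih₂
    refine ⟨_, h₁.imp h₂, fun K hK v xs => ?_⟩
    rw [BoundedFormula.realize_imp, BoundedFormula.realize_imp, e₁ K hK, e₂ K hK]
  | all φ _ =>
    refine ⟨⊤, BoundedFormula.IsQF.top, fun K hK v xs => ?_⟩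
    rw [BoundedFormula.realize_all, BoundedFormula.realize_top]
    exact ⟨fun _ => trivial, fun _ a => (hK.false a).elim⟩

lemma key_empty (S : L.Theory) (P : BStruc L) (φ : L.Formula P.carrier)
    (hw : ∀ θ : L.Formula P.carrier, θ.IsQF → θ.Realize id →
      ∃ (K : BStruc L) (f : P.carrier → K.carrier), IsEmpty K.carrier ∧ K.carrier ⊨ S ∧
        θ.Realize f ∧ ¬ φ.Realize f) :
    P.carrier ⊨ S ∧ ¬ φ.Realize (id : P.carrier → P.carrier) := by
  have hP : IsEmpty P.carrier := by
    obtain ⟨K, f, hK, -⟩ := hw ⊤ BoundedFormula.IsQF.top (Formula.realize_top.2 trivial)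
    exact ⟨fun a => hK.false (f a)⟩
  constructor
  · refine ⟨fun χ hχ => ?_⟩
    by_contra hc
    let χ' : L.Formula P.carrier := Formula.relabel Empty.elim χ
    have hχ' : ∀ (K : BStruc L) (f : P.carrier → K.carrier), χ'.Realize f ↔ K.carrier ⊨ χ := by
      intro K f
      rw [Formula.realize_relabel, Sentence.Realize, Subsingleton.elim (f ∘ Empty.elim) default]
    obtain ⟨θ, hθ, e⟩ := exists_qf_on_empty χ'
    have h1 : θ.not.Realize (id : P.carrier → P.carrier) default :=
      fun h => hc ((hχ' P id).1 ((e P hP id default).2 h))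
    obtain ⟨K, f, hK, hS, h2, -⟩ := hw θ.not hθ.not h1
    exact h2 ((e K hK f default).1 ((hχ' K f).2 (hS.realize_of_mem χ hχ)))
  · intro hφ
    obtain ⟨θ, hθ, e⟩ := exists_qf_on_empty φ
    obtain ⟨K, f, hK, hS, h2, h3⟩ := hw θ hθ ((e P hP id default).1 hφ)
    exact h3 ((e K hK f default).2 h2)

lemma key_nonempty (S : L.Theory) (P : BStruc L) (φ : L.Formula P.carrier)
    (hw : ∀ θ : L.Formula P.carrier, θ.IsQF → θ.Realize id →
      ∃ (K : BStruc L) (f : P.carrier → K.carrier), Nonempty K.carrier ∧ K.carrier ⊨ S ∧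
        θ.Realize f ∧ ¬ φ.Realize f) :
    ∃ (K : BStruc L) (e : P.carrier ↪[L] K.carrier), K.carrier ⊨ S ∧
      ¬ φ.Realize (fun a => e a) := by
  classical
  let D := {θ : L.Formula P.carrier // θ.IsQF ∧ θ.Realize id}
  have hw' : ∀ s : Finset D, ∃ (K : BStruc L) (f : P.carrier → K.carrier),
      Nonempty K.carrier ∧ K.carrier ⊨ S ∧ (∀ χ ∈ s, χ.1.Realize f) ∧ ¬ φ.Realize f := by
    intro s
    obtain ⟨θ, hθ, e⟩ := exists_conj_s12 (s.image Subtype.val) (by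
      intro χ hχ
      obtain ⟨d, -, rfl⟩ := Finset.mem_image.1 hχ
      exact d.2.1)
    obtain ⟨K, f, h1, h2, h3, h4⟩ := hw θ hθ ((e P id).2 (by
      intro χ hχ
      obtain ⟨d, -, rfl⟩ := Finset.mem_image.1 hχ
      exact d.2.2))
    exact ⟨K, f, h1, h2, fun χ hχ => (e K f).1 h3 _ (Finset.mem_image_of_mem _ hχ), h4⟩
  choose K f hne hS hD hφ using hw'
  let U : Ultrafilter (Finset D) := Ultrafilter.of Filter.atTop
  let Q : BStruc L := ⟨(U : Filter (Finset D)).Product fun s => (K s).carrier, inferInstance⟩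
  let g : P.carrier → Q.carrier := fun a =>
    ((fun s => f s a : ∀ s, (K s).carrier) :
      (U : Filter (Finset D)).Product fun s => (K s).carrier)
  have hg : ∀ χ : L.Formula P.carrier, χ.Realize g ↔ ∀ᶠ s in (U : Filter _), χ.Realize (f s) :=
    fun χ => Ultraproduct.realize_formula_cast (u := U) (M := fun s => (K s).carrier) χ
      (fun a s => f s a)
  obtain ⟨e, he⟩ := exists_embedding_of_qf P Q g (by
    intro θ hθ hr
    rw [hg]
    have : ∀ᶠ s in (Filter.atTop : Filter (Finset D)), θ.Realize (f s) := by
      filter_upwards [Filter.eventually_ge_atTop ({⟨θ, hθ, hr⟩} : Finset D)] with s hs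
      exact hD s ⟨θ, hθ, hr⟩ (hs (Finset.mem_singleton_self _))
    exact Ultrafilter.of_le _ this)
  refine ⟨Q, e, ⟨fun χ hχ => ?_⟩, ?_⟩
  · exact (Ultraproduct.sentence_realize (u := U) (M := fun s => (K s).carrier) χ).2
      (Filter.Eventually.of_forall fun s => (hS s).realize_of_mem χ hχ)
  · have : (fun a => e a) = g := funext he
    rw [this, hg]
    intro h
    obtain ⟨s, hs⟩ := h.exists
    exact hφ s hs

/-- Compactness: if `φ` holds in all extensions of `P` satisfying `S`, it follows from `S` and
a single quantifier-free formula of the diagram of `P`. -/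
lemma key (S : L.Theory) (P : BStruc L) (φ : L.Formula P.carrier)
    (hφ : ∀ (K : BStruc L) (e : P.carrier ↪[L] K.carrier), K.carrier ⊨ S →
      φ.Realize (fun a => e a)) :
    ∃ θ : L.Formula P.carrier, θ.IsQF ∧ θ.Realize (id : P.carrier → P.carrier) ∧
      ∀ (K : BStruc L) (f : P.carrier → K.carrier), K.carrier ⊨ S → θ.Realize f →
        φ.Realize f := by
  by_contra hcon
  have hw : ∀ θ : L.Formula P.carrier, θ.IsQF → θ.Realize id →
      ∃ (K : BStruc L) (f : P.carrier → K.carrier), K.carrier ⊨ S ∧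
        θ.Realize f ∧ ¬ φ.Realize f := by
    intro θ h1 h2
    by_contra hc
    refine hcon ⟨θ, h1, h2, fun K f h3 h4 => ?_⟩
    by_contra h5
    exact hc ⟨K, f, h3, h4, h5⟩
  by_cases hn : ∀ θ : L.Formula P.carrier, θ.IsQF → θ.Realize id →
      ∃ (K : BStruc L) (f : P.carrier → K.carrier), Nonempty K.carrier ∧ K.carrier ⊨ S ∧
        θ.Realize f ∧ ¬ φ.Realize f
  · obtain ⟨K, e, h1, h2⟩ := key_nonempty S P φ hn
    exact h2 (hφ K e h1)
  · push Not at hn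
    obtain ⟨θ₀, q₀, r₀, h₀⟩ := hn
    obtain ⟨h1, h2⟩ := key_empty S P φ (by
      intro θ q r
      obtain ⟨K, f, a, b, c⟩ := hw (θ ⊓ θ₀) (q.inf q₀) (Formula.realize_inf.2 ⟨r, r₀⟩)
      rw [Formula.realize_inf] at b
      refine ⟨K, f, ?_, a, b.1, c⟩
      by_contra hK
      rw [not_isEmpty_iff] at hK
      exact c (h₀ K f hK a b.2))
    exact h2 (hφ P (Embedding.refl L P.carrier) h1)

lemma exists_index {α : Type*} (F : Finset α) :
    ∃ (k : ℕ) (r : α → Fin k) (ys : Fin k → α), ∀ a ∈ F, ys (r a) = a := by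
  classical
  rcases isEmpty_or_nonempty α with h | ⟨⟨a₀⟩⟩
  · exact ⟨0, fun a => (h.false a).elim, finZeroElim, fun a => (h.false a).elim⟩
  · let G := insert a₀ F
    refine ⟨G.card, fun a => G.equivFin (if h : a ∈ G then ⟨a, h⟩ else
      ⟨a₀, Finset.mem_insert_self _ _⟩), fun i => (G.equivFin.symm i).1, fun a ha => ?_⟩
    have : a ∈ G := Finset.mem_insert_of_mem ha
    simp [this]

lemma realize_relabel0 {α β : Type*} {k : ℕ} (θ : L.Formula α) (r : α → β ⊕ Fin k)
    (K : BStruc L) (v : β → K.carrier) (xs : Fin k → K.carrier) :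
    (BoundedFormula.relabel r θ).Realize v xs ↔ θ.Realize (Sum.elim v xs ∘ r) := by
  rw [BoundedFormula.realize_relabel, Formula.Realize, Fin.castAdd_zero]
  exact iff_of_eq (congrArg₂ _ rfl (Subsingleton.elim _ _))

/-- Every model of `T_∀` embeds in a model of `T`. -/
lemma exists_embedding_of_univFrag (T : L.Theory) (N : BStruc L)
    (hN : N.carrier ⊨ univFrag T) :
    ∃ (K : BStruc L) (_ : N.carrier ↪[L] K.carrier), K.carrier ⊨ T := by
  by_contra hc
  obtain ⟨θ, q, r, h⟩ := key T N ⊥ (fun K e hK => (hc ⟨K, e, hK⟩).elim)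
  obtain ⟨F, hF⟩ := exists_support θ
  obtain ⟨k, ix, ys, hys⟩ := exists_index F
  let θ' : L.BoundedFormula Empty k := BoundedFormula.relabel (Sum.inr ∘ ix) θ
  have hmem : θ'.not.alls ∈ univFrag T := by
    refine ⟨⟨k, θ'.not, (q.relabel _).not, rfl⟩, fun K hK => ?_⟩
    refine BoundedFormula.realize_alls.2 fun xs => ?_
    rw [BoundedFormula.realize_not]
    intro hx
    exact h K _ hK ((realize_relabel0 θ _ K _ xs).1 hx)
  have := BoundedFormula.realize_alls.1 (hN.realize_of_mem _ hmem) ys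
  rw [BoundedFormula.realize_not] at this
  refine this ((realize_relabel0 θ _ N _ ys).2 ?_)
  exact (hF N _ id default (fun a ha => hys a ha)).2 r

lemma models_univFrag_of_embedding (T : L.Theory) (P Q : BStruc L)
    (e : P.carrier ↪[L] Q.carrier) (hQ : Q.carrier ⊨ T) : P.carrier ⊨ univFrag T := by
  refine ⟨fun ψ hψ => ?_⟩
  obtain ⟨⟨n, φ, q, rfl⟩, hT⟩ := hψ
  refine BoundedFormula.realize_alls.2 fun xs => ?_
  have := BoundedFormula.realize_alls.1 (hT Q hQ) (e ∘ xs)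
  rw [← q.realize_embedding e]
  convert this

/-- A `Σ₁`-elementary substructure of a model of a model complete theory is a model. -/
lemma models_of_sigma1 (S : L.Theory) (hS : IsModelComplete S) (M P : BStruc L)
    (e : M.carrier ↪[L] P.carrier) (he : Sigma1Elementary e) (hP : P.carrier ⊨ S) :
    M.carrier ⊨ S := by
  classical
  have hel := e.isElementary_of_exists (n := 0) (htv := by
    intro n φ x a hφ
    let w : Fin (n + 1) → P.carrier := Fin.snoc (e ∘ x) a
    let φ₁ : L.Formula (Fin (n + 1)) := φ.toFormula.relabel (Sum.elim Empty.elim id)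
    have hφ₁ : ∀ (K : BStruc L) (v : Fin (n + 1) → K.carrier),
        φ₁.Realize v ↔ φ.Realize default v := by
      intro K v
      rw [Formula.realize_relabel, BoundedFormula.realize_toFormula]
      exact iff_of_eq (congrArg₂ _ (Subsingleton.elim _ _) rfl)
    obtain ⟨θ, q, r, h⟩ := key S P (φ₁.relabel w) (by
      intro K g hK
      rw [Formula.realize_relabel]
      exact (hS P K g hP hK _ φ₁ w).1 ((hφ₁ P w).2 hφ))
    obtain ⟨F, hF⟩ := exists_support θ
    obtain ⟨k, ix, ys, hys⟩ := exists_index F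
    let ρ : P.carrier → Fin n ⊕ Fin k := fun p =>
      if hp : ∃ i, e (x i) = p then Sum.inl hp.choose else Sum.inr (ix p)
    have hρ : ∀ p (hp : ∃ i, e (x i) = p), ∃ i, ρ p = Sum.inl i ∧ e (x i) = p :=
      fun p hp => ⟨hp.choose, by simp only [ρ, dif_pos hp], hp.choose_spec⟩
    have h1 : (BoundedFormula.relabel ρ θ : L.BoundedFormula (Fin n) k).exs.Realize
        fun i => e (x i) := by
      refine BoundedFormula.realize_exs.2 ⟨ys, (realize_relabel0 θ ρ P _ ys).2 ?_⟩
      refine (hF P _ id default fun p hp => ?_).2 r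
      by_cases hp' : ∃ i, e (x i) = p
      · obtain ⟨i, hi, hi'⟩ := hρ p hp'
        simp [hi, hi']
      · simp [ρ, dif_neg hp', hys p hp]
    obtain ⟨zs, hz⟩ := BoundedFormula.realize_exs.1 (he n k _ (q.relabel ρ) x h1)
    have hz' := (realize_relabel0 θ ρ M _ zs).1 hz
    set u : P.carrier → M.carrier := Sum.elim x zs ∘ ρ with hu
    have hz2 : θ.Realize (e ∘ u) := by
      have := (q.realize_embedding e (v := u) (xs := default)).2 hz'
      rw [Formula.Realize]
      convert this
    have h2 := h P (e ∘ u) hP hz2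
    rw [Formula.realize_relabel, hφ₁] at h2
    refine ⟨u a, ?_⟩
    convert h2 using 1
    funext i
    refine Fin.lastCases ?_ (fun i => ?_) i
    · simp [w]
    · obtain ⟨j, hj, hj'⟩ := hρ (e (x i)) ⟨i, rfl⟩
      simp [w, hu, hj, hj'])
  refine ⟨fun ψ hψ => ?_⟩
  have h0 := hel (Formula.relabel Empty.elim ψ) finZeroElim
  rw [Formula.realize_relabel, Formula.realize_relabel] at h0
  have h3 := hP.realize_of_mem ψ hψ
  rw [Sentence.Realize] at h3 ⊢
  convert h0.1 (by convert h3)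

/-- the models of the model companion of `T` are exactly the
`T_∀`-existentially closed structures. -/
theorem modelCompanion_models_iff_ec (T Tstar : L.Theory)
    (h : IsModelCompanion T Tstar) (M : Type (max u v)) [L.Structure M] :
    M ⊨ Tstar ↔ IsEC (univFrag T) M := by
  obtain ⟨hTS, hST, hmc⟩ := h
  let M' : BStruc L := ⟨M, inferInstance⟩
  constructor
  · intro hM
    constructor
    · obtain ⟨N, e, hN⟩ := hST M' hM
      exact ⟨N, e, models_univFrag_of_embedding T N N (Embedding.refl L _) hN⟩
    · intro N e hN n k φ q v hv
      obtain ⟨K, e₁, hK⟩ := exists_embedding_of_univFrag T N hN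
      obtain ⟨P, e₂, hP⟩ := hTS K hK
      refine (hmc M' P (e₂.comp (e₁.comp e)) hM hP n φ.exs v).2 ?_
      obtain ⟨xs, hxs⟩ := BoundedFormula.realize_exs.1 hv
      refine BoundedFormula.realize_exs.2 ⟨e₂.comp e₁ ∘ xs, ?_⟩
      exact (q.realize_embedding (e₂.comp e₁)).2 hxs
  · rintro ⟨⟨N, e, hN⟩, hec⟩
    obtain ⟨K, e₁, hK⟩ := exists_embedding_of_univFrag T N hN
    obtain ⟨P, e₂, hP⟩ := hTS K hK
    obtain ⟨Q, e₃, hQ⟩ := hST P hP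
    exact models_of_sigma1 Tstar hmc M' P (e₂.comp (e₁.comp e))
      (hec P _ (models_univFrag_of_embedding T P Q e₃ hQ)) hP

end ModelCompanionship
end
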